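/- Let B ∈ ℝ^{n×n}_{≥0} be non-negative with per(B) > 0, and let B* be its permanental inverse. Then per(B*) · per(B) ≥ 1. -/

import Mathlib

open Matrix BigOperators

/-- The permanent of a square matrix. -/
noncomputable def per {α : Type*} [DecidableEq α] [Fintype α] (A : Matrix α α ℝ) : ℝ :=
  ∑ σ : Equiv.Perm α, ∏ i, A i (σ i)

/-- The permanental inverse. -/
noncomputable def pinv {d : ℕ} (B : Matrix (Fin (d + 1)) (Fin (d + 1)) ℝ) :
    Matrix (Fin (d + 1)) (Fin (d + 1)) ℝ :=
  Matrix.of fun i j => per (B.submatrix (Fin.succAbove j) (Fin.succAbove i)) / per B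

/-!
Write `P(I, J)` for the permanent of the block of a non-negative matrix with rows `I` and columns
`J`. Expanding along a row or a column gives, by induction on `I' ⊆ I`, the exchange inequality
`P(I, J) P(I' \ {r}, J') ≤ ∑ t ∈ J \ J', P(I \ {r}, J \ {t}) P(I', J' ∪ {t})`
for `r ∈ I'` and `J' ⊆ J`. When `I` and `J` are everything, the factors `P(I \ {r}, J \ {t})` are
the entries of the matrix `M` of permanental cofactors, so expanding a block of `M` along its rows
yields `P(Sᶜ, Tᶜ) per(B) ^ |S| ≤ per(M[S, T]) per(B)`. Take `S` and `T` full and use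
`B* = Mᵀ / per(B)`.
-/

section BijPermanent

variable {R α β γ δ : Type*} [CommSemiring R]
  [Fintype α] [DecidableEq α] [Fintype β] [DecidableEq β]
  [Fintype γ] [DecidableEq γ] [Fintype δ] [DecidableEq δ]

/-- The permanent of a matrix whose rows and columns may be indexed by different types, as a sum
over bijections from rows to columns. It is `0` if there are none, unlike the permanent of a
rectangular matrix as a sum over injections. -/
def bijPermanent (A : Matrix α β R) : R :=
  ∑ e : α ≃ β, ∏ i, A i (e i)

theorem bijPermanent_eq_permanent (A : Matrix α α R) : bijPermanent A = A.permanent :=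
  A.permanent_transpose

theorem bijPermanent_transpose (A : Matrix α β R) : bijPermanent Aᵀ = bijPermanent A :=
  Fintype.sum_equiv (Equiv.symmEquiv β α) _ _ fun e =>
    Fintype.prod_equiv e _ _ fun j => by simp

theorem bijPermanent_submatrix_equiv (A : Matrix α β R) (f : γ ≃ α) (g : δ ≃ β) :
    bijPermanent (A.submatrix f g) = bijPermanent A :=
  Fintype.sum_equiv (f.equivCongr g) _ _ fun e =>
    Fintype.prod_equiv f _ _ fun i => by simp

theorem bijPermanent_option (A : Matrix (Option α) β R) :
    bijPermanent A = ∑ b, A none b * bijPermanent (A.submatrix some ((↑) : {c // c ≠ b} → β)) := by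
  unfold bijPermanent
  rw [← (Equiv.sigmaFiberEquiv fun e : Option α ≃ β => e none).sum_comp, Fintype.sum_sigma]
  refine Fintype.sum_congr _ _ fun b => ?_
  rw [← (Equiv.optionSubtype b).symm.sum_comp, Finset.mul_sum]
  refine Fintype.sum_congr _ _ fun e => ?_
  simp [Fintype.prod_option, Equiv.sigmaFiberEquiv]

end BijPermanent

section BlockPermanent

variable {R α β : Type*} [CommSemiring R] [DecidableEq α] [DecidableEq β]

/-- The permanent of the block of `A` with rows `I` and columns `J`; it is `0` unless `I` and `J`
have the same cardinality. -/
def blockPermanent (A : Matrix α β R) (I : Finset α) (J : Finset β) : R :=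
  bijPermanent (A.submatrix ((↑) : I → α) ((↑) : J → β))

theorem bijPermanent_submatrix_val_comp {γ δ : Type*} [Fintype γ] [DecidableEq γ] [Fintype δ]
    [DecidableEq δ] (A : Matrix α β R) {I : Finset α} {J : Finset β} (f : γ ≃ I) (g : δ ≃ J) :
    bijPermanent (A.submatrix (fun i => (f i : α)) (fun j => (g j : β))) = blockPermanent A I J :=
  bijPermanent_submatrix_equiv (A.submatrix ((↑) : I → α) ((↑) : J → β)) f g

theorem blockPermanent_transpose (A : Matrix α β R) (I : Finset α) (J : Finset β) :
    blockPermanent Aᵀ J I = blockPermanent A I J :=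
  bijPermanent_transpose (A.submatrix ((↑) : I → α) ((↑) : J → β))

@[simp]
theorem blockPermanent_empty (A : Matrix α β R) : blockPermanent A ∅ ∅ = 1 := by
  have card_equiv : Fintype.card ((∅ : Finset α) ≃ (∅ : Finset β)) = 1 :=
    Fintype.card_equiv (Equiv.equivOfIsEmpty _ _)
  simp [blockPermanent, bijPermanent, card_equiv]

theorem blockPermanent_univ [Fintype α] (A : Matrix α α R) :
    blockPermanent A Finset.univ Finset.univ = A.permanent := by
  let e := (Equiv.subtypeUnivEquiv (Finset.mem_univ (α := α))).symm
  rw [← bijPermanent_eq_permanent, ← bijPermanent_submatrix_val_comp A e e]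
  rfl

/-- Removing an element from the subtype of a finset amounts to erasing it from the finset. -/
def subtypeNeEquivErase {s : Finset α} (a : s) : {x : s // x ≠ a} ≃ s.erase (a : α) where
  toFun x := ⟨x, by grind⟩
  invFun x := ⟨⟨x, by grind⟩, by grind⟩
  left_inv _ := rfl
  right_inv _ := rfl

theorem blockPermanent_eq_sum_row (A : Matrix α β R) {I : Finset α} {r : α} (hr : r ∈ I)
    (J : Finset β) :
    blockPermanent A I J = ∑ c ∈ J, A r c * blockPermanent A (I.erase r) (J.erase c) := by
  let r' : I := ⟨r, hr⟩
  let e := (subtypeNeEquivErase r').symm.optionCongr.trans (Equiv.optionSubtypeNe r')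
  rw [← bijPermanent_submatrix_val_comp A e (Equiv.refl J), bijPermanent_option,
    ← Finset.sum_coe_sort J]
  refine Fintype.sum_congr _ _ fun c => congrArg (A r c * ·) ?_
  exact bijPermanent_submatrix_val_comp A (Equiv.refl _) (subtypeNeEquivErase c)

theorem blockPermanent_eq_sum_col (A : Matrix α β R) (I : Finset α) {J : Finset β} {c : β}
    (hc : c ∈ J) :
    blockPermanent A I J = ∑ r ∈ I, A r c * blockPermanent A (I.erase r) (J.erase c) := by
  simpa only [blockPermanent_transpose, Matrix.transpose_apply] using
    blockPermanent_eq_sum_row Aᵀ hc I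

section Order

variable [PartialOrder R] [IsOrderedRing R] {A : Matrix α β R}

theorem blockPermanent_nonneg (hA : ∀ i j, 0 ≤ A i j) (I : Finset α) (J : Finset β) :
    0 ≤ blockPermanent A I J :=
  Finset.sum_nonneg fun _ _ => Finset.prod_nonneg fun _ _ => hA _ _

theorem blockPermanent_row_exchange_of_col_exchange (hA : ∀ i j, 0 ≤ A i j) {I I' : Finset α}
    {J J' : Finset β} {r : α} (hI : r ∈ I) (hI' : r ∈ I') (hJ : J' ⊆ J)
    (hcol : ∀ k ∈ J', blockPermanent A (I.erase r) (J.erase k) * blockPermanent A (I'.erase r) J' ≤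
      ∑ t ∈ J \ J', blockPermanent A (I.erase r) (J.erase t) *
        blockPermanent A (I'.erase r) ((insert t J').erase k)) :
    blockPermanent A I J * blockPermanent A (I'.erase r) J' ≤
      ∑ t ∈ J \ J', blockPermanent A (I.erase r) (J.erase t) *
        blockPermanent A I' (insert t J') := by
  set P := blockPermanent A (I.erase r) with hP
  set P' := blockPermanent A (I'.erase r) with hP'
  have expand_row (t) (ht : t ∈ J \ J') : P (J.erase t) * blockPermanent A I' (insert t J') =
      A r t * P (J.erase t) * P' J' +
        ∑ k ∈ J', A r k * (P (J.erase t) * P' ((insert t J').erase k)) := by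
    have ht' : t ∉ J' := (Finset.mem_sdiff.1 ht).2
    rw [blockPermanent_eq_sum_row A hI', Finset.sum_insert ht', Finset.erase_insert ht', mul_add,
      Finset.mul_sum]
    simp only [← hP', mul_left_comm, mul_assoc]
  calc blockPermanent A I J * P' J'
      = ∑ t ∈ J \ J', A r t * P (J.erase t) * P' J' +
          ∑ k ∈ J', A r k * (P (J.erase k) * P' J') := by
        rw [blockPermanent_eq_sum_row A hI, Finset.sum_mul, ← Finset.sum_sdiff hJ]
        simp only [← hP, mul_assoc]
    _ ≤ ∑ t ∈ J \ J', A r t * P (J.erase t) * P' J' +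
          ∑ k ∈ J', A r k * ∑ t ∈ J \ J', P (J.erase t) * P' ((insert t J').erase k) := by
        gcongr with k hk
        · exact hA r k
        · exact hcol k hk
    _ = ∑ t ∈ J \ J', P (J.erase t) * blockPermanent A I' (insert t J') := by
        rw [Finset.sum_congr rfl expand_row, Finset.sum_add_distrib]
        simp only [Finset.mul_sum]
        rw [Finset.sum_comm (s := J')]

theorem blockPermanent_col_exchange (hA : ∀ i j, 0 ≤ A i j) {I I' : Finset α} (hI : I' ⊆ I)
    {J J' : Finset β} (hJ : J' ⊆ J) {k : β} (hk : k ∈ J') :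
    blockPermanent A I (J.erase k) * blockPermanent A I' J' ≤
      ∑ t ∈ J \ J', blockPermanent A I (J.erase t) *
        blockPermanent A I' ((insert t J').erase k) := by
  induction I' using Finset.strongInduction generalizing I J J' k with
  | H I' ih =>
  have row_exchange (r) (hr : r ∈ I') :
      blockPermanent A I (J.erase k) * blockPermanent A (I'.erase r) (J'.erase k) ≤
        ∑ t ∈ J \ J', blockPermanent A (I.erase r) ((J.erase t).erase k) *
          blockPermanent A I' ((insert t J').erase k) := by
    have hJk : J'.erase k ⊆ J.erase k := Finset.erase_subset_erase k hJ
    refine (blockPermanent_row_exchange_of_col_exchange hA (hI hr) hr hJk fun _ hl =>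
      ih _ (Finset.erase_ssubset hr) (Finset.erase_subset_erase r hI) hJk hl).trans_eq ?_
    refine Finset.sum_congr (by grind) fun t ht => ?_
    rw [Finset.erase_right_comm, Finset.erase_insert_of_ne (by grind)]
  have expand_col (t) (ht : t ∈ J \ J') :
      ∑ r ∈ I', A r k * blockPermanent A (I.erase r) ((J.erase t).erase k) ≤
        blockPermanent A I (J.erase t) := by
    rw [blockPermanent_eq_sum_col A I (c := k) (by grind)]
    exact Finset.sum_le_sum_of_subset_of_nonneg hI fun r _ _ =>
      mul_nonneg (hA r k) (blockPermanent_nonneg hA _ _)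
  calc blockPermanent A I (J.erase k) * blockPermanent A I' J'
      = ∑ r ∈ I', A r k *
          (blockPermanent A I (J.erase k) * blockPermanent A (I'.erase r) (J'.erase k)) := by
        rw [blockPermanent_eq_sum_col A I' hk, Finset.mul_sum]
        simp only [mul_left_comm]
    _ ≤ ∑ r ∈ I', A r k * ∑ t ∈ J \ J', blockPermanent A (I.erase r) ((J.erase t).erase k) *
          blockPermanent A I' ((insert t J').erase k) := by
        gcongr with r hr
        · exact hA r k
        · exact row_exchange r hr
    _ = ∑ t ∈ J \ J', (∑ r ∈ I', A r k * blockPermanent A (I.erase r) ((J.erase t).erase k)) *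
          blockPermanent A I' ((insert t J').erase k) := by
        simp only [Finset.mul_sum, Finset.sum_mul, mul_assoc]
        rw [Finset.sum_comm]
    _ ≤ ∑ t ∈ J \ J', blockPermanent A I (J.erase t) *
          blockPermanent A I' ((insert t J').erase k) := by
        gcongr with t ht
        · exact blockPermanent_nonneg hA _ _
        · exact expand_col t ht

theorem blockPermanent_row_exchange (hA : ∀ i j, 0 ≤ A i j) {I I' : Finset α} (hI : I' ⊆ I)
    {J J' : Finset β} (hJ : J' ⊆ J) {r : α} (hr : r ∈ I') :
    blockPermanent A I J * blockPermanent A (I'.erase r) J' ≤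
      ∑ t ∈ J \ J', blockPermanent A (I.erase r) (J.erase t) *
        blockPermanent A I' (insert t J') :=
  blockPermanent_row_exchange_of_col_exchange hA (hI hr) hr hJ fun _ hk =>
    blockPermanent_col_exchange hA (Finset.erase_subset_erase r hI) hJ hk

end Order

end BlockPermanent

section PermCofactor

variable {R α β : Type*} [CommSemiring R] [Fintype α] [DecidableEq α] [Fintype β] [DecidableEq β]

/-- The matrix of permanental cofactors: its `(i, j)` entry is the permanent of `A` without row `i`
and column `j`. Like the classical cofactor matrix, it is the transpose of the adjugate. -/
def permCofactor (A : Matrix α β R) : Matrix α β R :=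
  Matrix.of fun i j => blockPermanent A (Finset.univ.erase i) (Finset.univ.erase j)

/-- The permanental analogue of Jacobi's identity for complementary minors. -/
theorem blockPermanent_compl_mul_pow_le [PartialOrder R] [IsOrderedRing R] {A : Matrix α β R}
    (hA : ∀ i j, 0 ≤ A i j) {S : Finset α} {T : Finset β} (hcard : S.card = T.card) :
    blockPermanent A Sᶜ Tᶜ * blockPermanent A Finset.univ Finset.univ ^ S.card ≤
      blockPermanent (permCofactor A) S T * blockPermanent A Finset.univ Finset.univ := by
  set Z := blockPermanent A Finset.univ Finset.univ
  induction S using Finset.induction_on generalizing T with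
  | empty =>
    obtain rfl : T = ∅ := Finset.card_eq_zero.1 hcard.symm
    simp [Z]
  | insert r S hr ih =>
    rw [Finset.card_insert_of_notMem hr] at hcard ⊢
    have exchange : Z * blockPermanent A (insert r S)ᶜ Tᶜ ≤
        ∑ t ∈ T, permCofactor A r t * blockPermanent A Sᶜ (T.erase t)ᶜ := by
      simpa only [permCofactor, Matrix.of_apply, ← Finset.compl_insert, ← Finset.compl_erase,
        ← Finset.compl_eq_univ_sdiff, compl_compl] using
        blockPermanent_row_exchange hA (Finset.subset_univ Sᶜ) (Finset.subset_univ Tᶜ)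
          (Finset.mem_compl.2 hr)
    calc blockPermanent A (insert r S)ᶜ Tᶜ * Z ^ (S.card + 1)
        = Z * blockPermanent A (insert r S)ᶜ Tᶜ * Z ^ S.card := by ring
      _ ≤ (∑ t ∈ T, permCofactor A r t * blockPermanent A Sᶜ (T.erase t)ᶜ) * Z ^ S.card := by
          gcongr
          exact pow_nonneg (blockPermanent_nonneg hA _ _) _
      _ = ∑ t ∈ T, permCofactor A r t * (blockPermanent A Sᶜ (T.erase t)ᶜ * Z ^ S.card) := by
          simp only [Finset.sum_mul, mul_assoc]
      _ ≤ ∑ t ∈ T, permCofactor A r t * (blockPermanent (permCofactor A) S (T.erase t) * Z) := by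
          refine Finset.sum_le_sum fun t ht => mul_le_mul_of_nonneg_left (ih ?_) ?_
          · rw [Finset.card_erase_of_mem ht, ← hcard, Nat.add_sub_cancel]
          · exact blockPermanent_nonneg hA _ _
      _ = blockPermanent (permCofactor A) (insert r S) T * Z := by
          rw [blockPermanent_eq_sum_row _ (Finset.mem_insert_self r S), Finset.erase_insert hr]
          simp only [Finset.sum_mul, mul_assoc]

theorem permanent_submatrix_succAbove {n : ℕ} (A : Matrix (Fin (n + 1)) (Fin (n + 1)) R)
    (i j : Fin (n + 1)) :
    (A.submatrix i.succAbove j.succAbove).permanent = permCofactor A i j := by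
  let e (p : Fin (n + 1)) : Fin n ≃ Finset.univ.erase p :=
    (finSuccAboveEquiv p).trans (Equiv.subtypeEquivRight (by simp))
  rw [← bijPermanent_eq_permanent]
  exact bijPermanent_submatrix_val_comp A (e i) (e j)

end PermCofactor

theorem per_eq_permanent {α : Type*} [Fintype α] [DecidableEq α] (A : Matrix α α ℝ) :
    per A = A.permanent :=
  bijPermanent_eq_permanent A

theorem pinv_eq_smul_transpose_permCofactor {n : ℕ} (B : Matrix (Fin (n + 1)) (Fin (n + 1)) ℝ) :
    pinv B = (per B)⁻¹ • (permCofactor B)ᵀ := by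
  ext i j
  simp [pinv, per_eq_permanent (B.submatrix _ _), permanent_submatrix_succAbove, div_eq_inv_mul]

theorem per_pinv {n : ℕ} (B : Matrix (Fin (n + 1)) (Fin (n + 1)) ℝ) :
    per (pinv B) = (permCofactor B).permanent / per B ^ (n + 1) := by
  rw [per_eq_permanent (pinv B), pinv_eq_smul_transpose_permCofactor, Matrix.permanent_smul,
    Matrix.permanent_transpose, Fintype.card_fin, inv_pow, div_eq_inv_mul]

theorem stmt3_general {R α : Type*} [CommSemiring R] [PartialOrder R] [IsOrderedRing R]
    [Fintype α] [DecidableEq α] (B : Matrix α α R) (hB : ∀ i j, 0 ≤ B i j) :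
    B.permanent ^ Fintype.card α ≤ (permCofactor B).permanent * B.permanent := by
  simpa [blockPermanent_univ] using
    blockPermanent_compl_mul_pow_le hB (S := Finset.univ) (T := Finset.univ) rfl

theorem stmt3 {n : ℕ} (B : Matrix (Fin (n + 1)) (Fin (n + 1)) ℝ)
    (hB : ∀ i j, 0 ≤ B i j) (hper : 0 < per B) :
    1 ≤ per (pinv B) * per B := by
  rw [per_pinv, div_mul_eq_mul_div, one_le_div (pow_pos hper _), per_eq_permanent B]
  simpa using stmt3_general B hB
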